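/- For every integer a ≥ 3, let S ⊆ {0,1}^a be the set consisting of the all-zeros vector 0^a, the a − 2 weight-one vectors e_2, ..., e_{a-1}, the weight-two vector 1_{{1,3}}, and the a − 3 weight-two vectors 1_{{i,i+1}} for i ∈ {3, ..., a−1}; thus |S| = 2a − 3. Then there exists a path v_1, ..., v_n in {0,1}^a with n = 2^a − 2a + 3, pairwise distinct vertices, v_1 = e_1, v_n = e_a, consecutive vertices differing in exactly one coordinate, all interior vertices of weight at least 2, and whose set of visited vertices is exactly the complement {0,1}^a \ S. -/

import Mathlib

/-- The weight of a hypercube vertex: its number of 1-coordinates. -/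
def weight {a : ℕ} (v : Fin a → Bool) : ℕ :=
  (Finset.univ.filter (fun j => v j = true)).card

/-- Two hypercube vertices are adjacent if they differ in exactly one coordinate. -/
def hammingAdj {a : ℕ} (u v : Fin a → Bool) : Prop :=
  (Finset.univ.filter (fun j => u j ≠ v j)).card = 1

/-- `unitVec a i` is the vertex `e_i` that is `1` exactly in the (1-based) coordinate `i`. -/
def unitVec (a i : ℕ) : Fin a → Bool := fun j => decide (j.val + 1 = i)

/-- `pairVec a i k` is the vertex `1_{{i,k}}` that is `1` exactly in the (1-based)
coordinates `i` and `k`. -/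
def pairVec (a i k : ℕ) : Fin a → Bool := fun j => decide (j.val + 1 = i ∨ j.val + 1 = k)

/-- The missed set `S`: the all-zeros vector, the weight-one vectors `e_2, …, e_(a-1)`,
the weight-two vector `1_{{1,3}}`, and the weight-two vectors `1_{{i,i+1}}` for
`3 ≤ i ≤ a-1`. -/
def missedSet (a : ℕ) : Set (Fin a → Bool) :=
  {u | u = (fun _ => false) ∨
       (∃ i, 2 ≤ i ∧ i ≤ a - 1 ∧ u = unitVec a i) ∨
       u = pairVec a 1 3 ∨
       (∃ i, 3 ≤ i ∧ i ≤ a - 1 ∧ u = pairVec a i (i + 1))}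

/-! A path in the `a`-cube doubles to a path in the `(a+1)`-cube: traverse it on one facet
`x_{a+1} = b`, cross over, and come back, so that both ends are copies of the old starting point.
By induction this gives a path from `e_2` through all nonzero vertices.

In the flag path the vertex before `e_a` is `1_{2,a}`. Leave the path there, cross to the facet
`x_{a+1} = 1`, and follow the doubled path of the punctured `(a-1)`-cube to `1_{2,a+1}`, which is
adjacent to `e_{a+1}`. The only new misses are `e_a` and its copy `1_{a,a+1}` on the new facet. -/

lemma two_mul_le_two_pow (n : ℕ) : 2 * n ≤ 2 ^ n := by
  cases n with
  | zero => simp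
  | succ n => rw [pow_succ']; exact Nat.mul_le_mul_left 2 Nat.lt_two_pow_self

section PathSupport

variable {V W : Type*} {G : SimpleGraph V} {H : SimpleGraph W}

/-- `S` is exactly the set of vertices visited by some path of `G` from `u` to `v`. -/
def IsPathSupport (G : SimpleGraph V) (u v : V) (S : Set V) : Prop :=
  ∃ p : G.Walk u v, p.IsPath ∧ ∀ w, w ∈ p.support ↔ w ∈ S

lemma IsPathSupport.symm {u v : V} {S : Set V} (h : IsPathSupport G u v S) :
    IsPathSupport G v u S := by
  obtain ⟨p, hp, hS⟩ := h
  exact ⟨p.reverse, hp.reverse, by simpa using hS⟩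

lemma IsPathSupport.map {u v : V} {S : Set V} (f : G ↪g H) (h : IsPathSupport G u v S) :
    IsPathSupport H (f u) (f v) (f '' S) := by
  obtain ⟨p, hp, hS⟩ := h
  exact ⟨p.map f.toHom, hp.map f.injective, by simp [hS]⟩

lemma IsPathSupport.union {u v w x : V} {S T : Set V} (hS : IsPathSupport G u v S)
    (hT : IsPathSupport G w x T) (hvw : G.Adj v w) (hST : Disjoint S T) :
    IsPathSupport G u x (S ∪ T) := by
  obtain ⟨p, hp, hpS⟩ := hS
  obtain ⟨q, hq, hqT⟩ := hT
  have hsupp : (p.append (.cons hvw q)).support = p.support ++ q.support := by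
    rw [SimpleGraph.Walk.support_append, SimpleGraph.Walk.support_cons, List.tail_cons]
  refine ⟨p.append (.cons hvw q), .mk' ?_, fun y ↦ ?_⟩
  · rw [hsupp, List.nodup_append']
    exact ⟨hp.support_nodup, hq.support_nodup, fun y hy hy' ↦
      hST.notMem_of_mem_left ((hpS y).1 hy) ((hqT y).1 hy')⟩
  · rw [hsupp, List.mem_append, hpS, hqT, Set.mem_union]

lemma IsPathSupport.concat {u v w : V} {S : Set V} (h : IsPathSupport G u v (insert w S)ᶜ)
    (hvw : G.Adj v w) (hw : w ∉ S) : IsPathSupport G u w Sᶜ := by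
  have hsingleton : IsPathSupport G w w {w} := ⟨.nil, .nil, by simp⟩
  have hunion : Sᶜ = (insert w S)ᶜ ∪ {w} := by grind
  rw [hunion]
  exact h.union hsingleton hvw (by simp)

lemma ncard_support_of_isPath {u v : V} {p : G.Walk u v} (hp : p.IsPath) :
    {w | w ∈ p.support}.ncard = p.length + 1 := by
  classical
  rw [← List.coe_toFinset, Set.ncard_coe_finset, List.toFinset_card_of_nodup hp.support_nodup,
    SimpleGraph.Walk.length_support]

end PathSupport

section Hypercube

variable {n : ℕ}

/-- The hypercube graph on `{0,1}^n`. -/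
def hypercube (n : ℕ) : SimpleGraph (Fin n → Bool) where
  Adj := hammingAdj
  symm := ⟨fun u v h ↦ (hammingDist_comm v u).trans h⟩
  loopless := ⟨fun u h ↦ by simp [hammingAdj] at h⟩

lemma hypercube_adj_iff {u v : Fin n → Bool} :
    (hypercube n).Adj u v ↔ hammingDist u v = 1 :=
  Iff.rfl

lemma hammingDist_snoc {α : Type*} [DecidableEq α] (u v : Fin n → α) (b c : α) :
    hammingDist (Fin.snoc u b : Fin (n + 1) → α) (Fin.snoc v c) =
      hammingDist u v + if b = c then 0 else 1 := by
  simp [hammingDist, Finset.card_filter, Fin.sum_univ_castSucc]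

/-- The embedding of the `n`-cube as the facet of the `(n+1)`-cube on which the last coordinate
equals `b`. -/
def facet (b : Bool) : hypercube n ↪g hypercube (n + 1) where
  toFun u := Fin.snoc u b
  inj' := Fin.snoc_left_injective (α := fun _ ↦ Bool) b
  map_rel_iff' {u v} := by simp [hypercube_adj_iff, hammingDist_snoc]

lemma facet_eq_iff {b : Bool} {u : Fin n → Bool} {w : Fin (n + 1) → Bool} :
    facet b u = w ↔ u = Fin.init w ∧ b = w (Fin.last n) := by
  rw [← Fin.snoc_inj (α := fun _ ↦ Bool), Fin.snoc_init_self]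
  rfl

lemma facet_inj {b c : Bool} {u v : Fin n → Bool} : facet b u = facet c v ↔ u = v ∧ b = c :=
  Fin.snoc_inj (α := fun _ ↦ Bool)

lemma exists_facet_eq (w : Fin (n + 1) → Bool) : ∃ b u, facet b u = w :=
  ⟨w (Fin.last n), Fin.init w, facet_eq_iff.2 ⟨rfl, rfl⟩⟩

lemma facet_adj_facet_not (b : Bool) (u : Fin n → Bool) :
    (hypercube (n + 1)).Adj (facet b u) (facet (!b) u) := by
  simp [hypercube_adj_iff, facet, hammingDist_snoc]

lemma disjoint_image_facet (b : Bool) (S T : Set (Fin n → Bool)) :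
    Disjoint (facet b '' S) (facet (!b) '' T) := by
  rw [Set.disjoint_left]
  rintro _ ⟨u, -, rfl⟩ ⟨v, -, hv⟩
  simp [facet_inj] at hv

lemma init_facet (b : Bool) (u : Fin n → Bool) :
    Fin.init (α := fun _ ↦ Bool) (facet b u) = u :=
  (facet_eq_iff.1 rfl).1.symm

lemma IsPathSupport.preimage_init {u v : Fin n → Bool} {S : Set (Fin n → Bool)} (b : Bool)
    (h : IsPathSupport (hypercube n) u v S) :
    IsPathSupport (hypercube (n + 1)) (facet b u) (facet (!b) u) (Fin.init ⁻¹' S) := by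
  have hunion : Fin.init ⁻¹' S = facet b '' S ∪ facet (!b) '' S := by
    ext w
    obtain ⟨c, u, rfl⟩ := exists_facet_eq w
    cases b <;> cases c <;> simp [facet_inj, init_facet]
  rw [hunion]
  exact (h.map _).union (h.symm.map _) (facet_adj_facet_not b v) (disjoint_image_facet b S S)

lemma init_zero : Fin.init (fun _ ↦ false : Fin (n + 1) → Bool) = fun _ ↦ false := rfl

lemma init_unitVec (i : ℕ) : Fin.init (unitVec (n + 1) i) = unitVec n i := rfl

lemma init_pairVec (i k : ℕ) : Fin.init (pairVec (n + 1) i k) = pairVec n i k := rfl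

lemma unitVec_last (i : ℕ) : unitVec (n + 1) i (Fin.last n) = decide (n + 1 = i) := rfl

lemma pairVec_last (i k : ℕ) :
    pairVec (n + 1) i k (Fin.last n) = decide (n + 1 = i ∨ n + 1 = k) := rfl

lemma unitVec_succ_self : unitVec n (n + 1) = fun _ ↦ false := by
  ext j
  simp [unitVec, j.isLt.ne]

lemma pairVec_self_succ : pairVec n n (n + 1) = unitVec n n := by
  ext j
  simp [pairVec, unitVec, j.isLt.ne]

lemma facet_false_zero :
    facet false (fun _ ↦ false : Fin n → Bool) = fun _ ↦ false :=
  facet_eq_iff.2 ⟨rfl, rfl⟩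

lemma facet_true_zero :
    facet true (fun _ ↦ false : Fin n → Bool) = unitVec (n + 1) (n + 1) := by
  rw [facet_eq_iff, init_unitVec, unitVec_succ_self, unitVec_last]
  simp

lemma facet_false_unitVec {i : ℕ} (hi : i ≤ n) : facet false (unitVec n i) = unitVec (n + 1) i := by
  rw [facet_eq_iff, init_unitVec, unitVec_last]
  simpa using by omega

lemma facet_true_unitVec (i : ℕ) : facet true (unitVec n i) = pairVec (n + 1) i (n + 1) := by
  rw [facet_eq_iff, init_pairVec, pairVec_last]
  refine ⟨funext fun j ↦ ?_, by simp⟩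
  simp [unitVec, pairVec, j.isLt.ne]

lemma init_eq_zero_iff {w : Fin (n + 1) → Bool} :
    Fin.init w = (fun _ ↦ false) ↔ w = unitVec (n + 1) (n + 1) ∨ w = fun _ ↦ false := by
  obtain ⟨b, u, rfl⟩ := exists_facet_eq w
  rw [init_facet, ← facet_true_zero, ← facet_false_zero, facet_inj, facet_inj]
  cases b <;> simp

lemma zero_ne_unitVec_self (hn : 1 ≤ n) : (fun _ ↦ false) ≠ unitVec n n := by
  obtain ⟨n, rfl⟩ := Nat.exists_eq_add_of_le' hn
  rw [← facet_true_zero, ← facet_false_zero, ne_eq, facet_inj]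
  simp

lemma hypercube_adj_zero_unitVec {i : ℕ} (hi : 1 ≤ i) (hin : i ≤ n) :
    (hypercube n).Adj (fun _ ↦ false) (unitVec n i) := by
  obtain ⟨j, rfl⟩ := Nat.exists_eq_add_of_le' hi
  rw [hypercube_adj_iff, hammingDist, Finset.card_eq_one]
  exact ⟨⟨j, hin⟩, by ext k; simp [unitVec, Fin.ext_iff]⟩

lemma preimage_init_compl_zero :
    Fin.init (α := fun _ ↦ Bool) ⁻¹' {fun _ : Fin n ↦ false}ᶜ =
      {unitVec (n + 1) (n + 1), fun _ ↦ false}ᶜ := by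
  ext w
  simp [init_eq_zero_iff]

lemma two_le_weight_of_ne {v : Fin n → Bool} (hzero : v ≠ fun _ ↦ false)
    (hunit : ∀ i, 1 ≤ i → i ≤ n → v ≠ unitVec n i) : 2 ≤ weight v := by
  by_contra! hweight
  obtain ⟨j, hj⟩ : ∃ j, v j = true := by simpa [funext_iff] using hzero
  refine hunit (j + 1) (by omega) j.isLt (funext fun k ↦ ?_)
  have hk : v k = true ↔ k = j :=
    ⟨fun hk ↦ Finset.card_le_one.1 (Nat.le_of_lt_succ hweight) k (by simpa) j (by simpa),
      fun hk ↦ hk ▸ hj⟩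
  rw [Bool.eq_iff_iff, hk]
  simp [unitVec, Fin.ext_iff]

end Hypercube

section MissedSet

variable {a : ℕ}

lemma facet_true_mem_missedSet (ha : 3 ≤ a) {u : Fin a → Bool} :
    facet true u ∈ missedSet (a + 1) ↔ u = unitVec a a := by
  simp only [missedSet, Set.mem_ofPred_eq, facet_eq_iff, init_zero, init_unitVec, init_pairVec,
    unitVec_last, pairVec_last]
  have hlast : u = pairVec a a (a + 1) ↔ u = unitVec a a := by rw [pairVec_self_succ]
  grind

lemma facet_false_mem_missedSet (ha : 3 ≤ a) {u : Fin a → Bool} :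
    facet false u ∈ missedSet (a + 1) ↔ u ∈ insert (unitVec a a) (missedSet a) := by
  simp only [missedSet, Set.mem_ofPred_eq, facet_eq_iff, init_zero, init_unitVec, init_pairVec,
    unitVec_last, pairVec_last, Set.mem_insert_iff]
  grind

lemma missedSet_three : missedSet 3 = {fun _ ↦ false, unitVec 3 2, pairVec 3 1 3} := by
  ext u
  simp only [missedSet, Set.mem_ofPred_eq, Set.mem_insert_iff, Set.mem_singleton_iff]
  grind

lemma missedSet_succ (ha : 3 ≤ a) :
    missedSet (a + 1) =
      insert (facet true (unitVec a a)) (facet false '' insert (unitVec a a) (missedSet a)) := by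
  ext w
  obtain ⟨b, u, rfl⟩ := exists_facet_eq w
  cases b
  · rw [facet_false_mem_missedSet ha]
    simp [facet_inj]
  · rw [facet_true_mem_missedSet ha]
    simp [facet_inj]

lemma compl_insert_missedSet_succ (ha : 3 ≤ a) :
    (insert (unitVec (a + 1) (a + 1)) (missedSet (a + 1)))ᶜ =
      facet false '' (insert (unitVec a a) (missedSet a))ᶜ ∪
        facet true '' {unitVec a a, fun _ ↦ false}ᶜ := by
  ext w
  obtain ⟨b, u, rfl⟩ := exists_facet_eq w
  rw [← facet_true_zero]
  cases b
  · simp [facet_inj, facet_false_mem_missedSet ha]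
  · simp [facet_inj, facet_true_mem_missedSet ha, and_comm]

lemma unitVec_self_notMem_missedSet (ha : 3 ≤ a) : unitVec a a ∉ missedSet a := by
  induction a, ha using Nat.le_induction with
  | base =>
    rw [missedSet_three]
    decide
  | succ a ha _ =>
    rw [← facet_true_zero, facet_true_mem_missedSet ha]
    exact zero_ne_unitVec_self (by omega)

lemma ncard_missedSet (ha : 3 ≤ a) : (missedSet a).ncard = 2 * a - 3 := by
  induction a, ha using Nat.le_induction with
  | base =>
    rw [missedSet_three, Set.ncard_eq_toFinset_card']
    decide
  | succ a ha ih =>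
    rw [missedSet_succ ha, Set.ncard_insert_of_notMem (by simp [facet_inj]),
      Set.ncard_image_of_injective _ (facet false).injective,
      Set.ncard_insert_of_notMem (unitVec_self_notMem_missedSet ha), ih]
    omega

lemma ncard_compl_missedSet (ha : 3 ≤ a) : (missedSet a)ᶜ.ncard = 2 ^ a - 2 * a + 3 := by
  have hsum := Set.ncard_add_ncard_compl (missedSet a)
  have hcube : Nat.card (Fin a → Bool) = 2 ^ a := by simp
  have hle : 2 * a ≤ 2 ^ a := two_mul_le_two_pow a
  rw [ncard_missedSet ha, hcube] at hsum
  omega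

lemma two_le_weight_of_notMem_missedSet {v : Fin a → Bool} (hv : v ∉ missedSet a)
    (hfirst : v ≠ unitVec a 1) (hlast : v ≠ unitVec a a) : 2 ≤ weight v := by
  refine two_le_weight_of_ne (fun hzero ↦ hv (.inl hzero)) fun i hi hia hunit ↦
    hv (.inr (.inl ⟨i, ?_, ?_, hunit⟩)) <;>
  grind

end MissedSet

lemma exists_isPathSupport_compl_zero {n : ℕ} (hn : 2 ≤ n) :
    ∃ v, IsPathSupport (hypercube n) (unitVec n 2) v {fun _ ↦ false}ᶜ := by
  induction n, hn using Nat.le_induction with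
  | base =>
    have h₁ : (hypercube 2).Adj (unitVec 2 2) (pairVec 2 1 2) := hypercube_adj_iff.2 (by decide)
    have h₂ : (hypercube 2).Adj (pairVec 2 1 2) (unitVec 2 1) := hypercube_adj_iff.2 (by decide)
    refine ⟨unitVec 2 1, .cons h₁ (.cons h₂ .nil), .mk' ?_, ?_⟩ <;>
      simp only [SimpleGraph.Walk.support_cons, SimpleGraph.Walk.support_nil, Set.mem_compl_iff,
        Set.mem_singleton_iff] <;>
      decide
  | succ n hn ih =>
    obtain ⟨v, hv⟩ := ih
    have hadj : (hypercube (n + 1)).Adj (facet true (unitVec n 2)) (facet true fun _ ↦ false) :=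
      (facet true).map_adj_iff.2 (hypercube_adj_zero_unitVec one_le_two hn).symm
    have hpath := hv.preimage_init false
    rw [preimage_init_compl_zero, facet_false_unitVec hn] at hpath
    rw [facet_true_zero] at hadj
    exact ⟨_, hpath.concat hadj (by simpa using (zero_ne_unitVec_self (by omega)).symm)⟩

lemma isPathSupport_compl_insert_missedSet {a : ℕ} (ha : 3 ≤ a) :
    IsPathSupport (hypercube a) (unitVec a 1) (pairVec a 2 a)
      (insert (unitVec a a) (missedSet a))ᶜ := by
  induction a, ha using Nat.le_induction with
  | base =>
    have h₁ : (hypercube 3).Adj (unitVec 3 1) (pairVec 3 1 2) := hypercube_adj_iff.2 (by decide)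
    have h₂ : (hypercube 3).Adj (pairVec 3 1 2) fun _ ↦ true := hypercube_adj_iff.2 (by decide)
    have h₃ : (hypercube 3).Adj (fun _ ↦ true) (pairVec 3 2 3) := hypercube_adj_iff.2 (by decide)
    refine ⟨.cons h₁ (.cons h₂ (.cons h₃ .nil)), .mk' ?_, ?_⟩ <;>
      simp only [SimpleGraph.Walk.support_cons, SimpleGraph.Walk.support_nil, missedSet_three,
        Set.mem_compl_iff, Set.mem_insert_iff, Set.mem_singleton_iff] <;>
      decide
  | succ a ha ih =>
    obtain ⟨n, rfl⟩ := Nat.exists_eq_add_of_le' (Nat.one_le_of_lt ha)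
    obtain ⟨v, hv⟩ := exists_isPathSupport_compl_zero (n := n) (by omega)
    have hupper := (hv.preimage_init true).map (facet true)
    rw [Bool.not_true, facet_true_unitVec, facet_false_unitVec (by omega), facet_true_unitVec,
      preimage_init_compl_zero] at hupper
    have hunion := (ih.map (facet false)).union hupper (facet_adj_facet_not false _)
      (disjoint_image_facet false _ _)
    rw [facet_false_unitVec (by omega)] at hunion
    rwa [compl_insert_missedSet_succ ha]

lemma isPathSupport_compl_missedSet {a : ℕ} (ha : 3 ≤ a) :
    IsPathSupport (hypercube a) (unitVec a 1) (unitVec a a) (missedSet a)ᶜ := by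
  refine (isPathSupport_compl_insert_missedSet ha).concat ?_ (unitVec_self_notMem_missedSet ha)
  obtain ⟨n, rfl⟩ := Nat.exists_eq_add_of_le' (Nat.one_le_of_lt ha)
  rw [← facet_true_unitVec, ← facet_true_zero, (facet true).map_adj_iff]
  exact (hypercube_adj_zero_unitVec one_le_two (by omega)).symm

/-- **strengthened Lemma 2.**  For `a ≥ 3`, the missed set `S` has exactly
`2a - 3` elements, and there is a self-avoiding path `v 0, …, v (n-1)` with
`n = 2^a - 2a + 3`, from `e_1` to `e_a`, consecutive vertices differing in exactly one
coordinate, all interior vertices of weight at least `2`, whose set of visited vertices is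
exactly the complement of `S`. -/
theorem flag_sequence_missed_set (a : ℕ) (ha : 3 ≤ a) :
    (missedSet a).ncard = 2 * a - 3 ∧
    ∃ (n : ℕ) (v : ℕ → (Fin a → Bool)),
      n = 2 ^ a - 2 * a + 3 ∧
      (∀ i j, i < n → j < n → v i = v j → i = j) ∧
      v 0 = unitVec a 1 ∧
      v (n - 1) = unitVec a a ∧
      (∀ i, i + 1 < n → hammingAdj (v i) (v (i + 1))) ∧
      (∀ i, 0 < i → i + 1 < n → 2 ≤ weight (v i)) ∧
      (∀ u : Fin a → Bool, (∃ i, i < n ∧ v i = u) ↔ u ∉ missedSet a) := by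
  obtain ⟨p, hp, hS⟩ := isPathSupport_compl_missedSet ha
  have hlength : p.length + 1 = 2 ^ a - 2 * a + 3 := by
    have hcompl : {w | w ∈ p.support} = (missedSet a)ᶜ := Set.ext hS
    rw [← ncard_support_of_isPath hp, hcompl, ncard_compl_missedSet ha]
  refine ⟨ncard_missedSet ha, p.length + 1, p.getVert, hlength, fun i j hi hj ↦
    hp.getVert_injOn (Nat.le_of_lt_succ hi) (Nat.le_of_lt_succ hj), p.getVert_zero,
    p.getVert_length, fun i hi ↦ p.adj_getVert_succ (Nat.lt_of_succ_lt_succ hi),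
    fun i hi₀ hi ↦ ?_, fun u ↦ ?_⟩
  · have hmem : p.getVert i ∉ missedSet a := (hS _).1 (p.getVert_mem_support i)
    refine two_le_weight_of_notMem_missedSet hmem (fun hfirst ↦ ?_) fun hlast ↦ ?_
    · have := (hp.getVert_eq_start_iff (by omega)).1 hfirst
      omega
    · have := (hp.getVert_eq_end_iff (by omega)).1 hlast
      omega
  · rw [← Set.mem_compl_iff, ← hS, SimpleGraph.Walk.mem_support_iff_exists_getVert]
    simp [and_comm]
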